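/- Let a, b be coprime positive integers with a < b and b odd. Then every set Γ ⊆ ℝ with the property that γ − γ' ∈ 𝒪_{a,b} for all distinct γ, γ' ∈ Γ is a finite set. Consequently, for λ = a/b with b odd, every collection of pairwise orthogonal exponential functions in L²(X_λ, ν_λ) is finite. -/

import Mathlib

open MeasureTheory
open scoped ENNReal

/-- The set `𝒪_{a,b} = {(1/4)(b/a)ⁿ(2k+1) : n ∈ ℕ₀, k ∈ ℤ}`. -/
def OsetAB (a b : ℕ) : Set ℝ :=
  {x : ℝ | ∃ (n : ℕ) (k : ℤ), x = (1 / 4) * ((b : ℝ) / (a : ℝ)) ^ n * (2 * (k : ℝ) + 1)}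

/-!
Two ingredients control a set `Γ` with differences in `𝒪_{a,b}`. By parity, when three elements
`x + y = z` of `𝒪_{a,b}` have exponents `l`, `m`, `n`, the largest exponent occurs at least twice.
Moreover two distinct elements with the same exponent `n` are at least `(b/a)ⁿ / 2` apart. So once
`γ₀ ≠ γ₁` in `Γ` are fixed, every other `γ ∈ Γ` has either a small exponent against `γ₀`, or the
same exponent `n` against both, and then `(b/a)ⁿ ≤ 2|γ₁ - γ₀|`. The exponents against `γ₀` are thus
bounded, which makes the points `γ - γ₀` torsion of bounded order in `ℝ / ½ℤ`. They are distinct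
there because `𝒪_{a,b}` contains no half-integer, and `ℝ / ½ℤ` has finite torsion.

On the analytic side, the inner product of two exponentials is the characteristic function `ν̂` at
`2π(γ - γ')`. Invariance iterates to `ν̂(t) = (∏_{k<n} cos (λᵏt)) ν̂(λⁿt)`, and `ν̂(λⁿt)` tends to
`ν̂(0) ≠ 0`, so the zeros of `ν̂` are exactly those of the cosines `cos (λᵏt)`.
-/

namespace OsetAB

/-- The elements of `𝒪_{a,b}` of exponent `n`, that is, `(1/4)(b/a)ⁿ(2ℤ + 1)`. For some `a, b` the
layers overlap, so the exponent is a relation rather than a function. -/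
def layer (a b n : ℕ) : Set ℝ :=
  {x : ℝ | ∃ k : ℤ, x = (1 / 4) * ((b : ℝ) / (a : ℝ)) ^ n * (2 * (k : ℝ) + 1)}

variable {a b l m n : ℕ} {x y : ℝ}

lemma mem_iff_exists_mem_layer : x ∈ OsetAB a b ↔ ∃ n, x ∈ layer a b n := Iff.rfl

lemma mem_layer_iff (ha : 0 < a) :
    x ∈ layer a b n ↔ ∃ u : ℤ, Odd u ∧ 4 * a ^ n * x = b ^ n * u := by
  have hclear (k : ℤ) : x = 1 / 4 * ((b : ℝ) / a) ^ n * (2 * k + 1) ↔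
      4 * a ^ n * x = b ^ n * ((2 * k + 1 : ℤ) : ℝ) := by
    push_cast
    rw [div_pow]
    field_simp
  constructor
  · rintro ⟨k, hk⟩
    exact ⟨2 * k + 1, odd_two_mul_add_one k, (hclear k).1 hk⟩
  · rintro ⟨_, ⟨k, rfl⟩, hk⟩
    exact ⟨k, (hclear k).2 hk⟩

lemma neg_mem_layer (hx : x ∈ layer a b n) : -x ∈ layer a b n := by
  obtain ⟨k, rfl⟩ := hx
  exact ⟨-k - 1, by push_cast; ring⟩

lemma add_notMem_layer (ha : 0 < a) (hb : Odd b) (hln : l < n) (hmn : m < n)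
    (hx : x ∈ layer a b l) (hy : y ∈ layer a b m) : x + y ∉ layer a b n := by
  intro hxy
  obtain ⟨u, hu, hx⟩ := (mem_layer_iff ha).1 hx
  obtain ⟨v, hv, hy⟩ := (mem_layer_iff ha).1 hy
  obtain ⟨w, hw, hxy⟩ := (mem_layer_iff ha).1 hxy
  obtain ⟨i, rfl⟩ := Nat.exists_eq_add_of_lt hln
  obtain ⟨j, hj⟩ := Nat.exists_eq_add_of_lt hmn
  have hsumR : (a : ℝ) ^ (i + 1) * (b ^ l * u) + a ^ (j + 1) * (b ^ m * v)
      = b ^ (l + i + 1) * w := by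
    have hy' : (a : ℝ) ^ (j + 1) * (4 * a ^ m * y) = 4 * a ^ (l + i + 1) * y := by
      rw [hj]; ring
    rw [← hx, ← hy, ← hxy, hy']
    ring
  have hsum : (a : ℤ) ^ (i + 1) * (b ^ l * u) + a ^ (j + 1) * (b ^ m * v)
      = b ^ (l + i + 1) * w := by
    exact_mod_cast hsumR
  have hbZ : Odd (b : ℤ) := (Int.odd_coe_nat b).2 hb
  have hparity (k : ℕ) {z : ℤ} (hz : Odd z) : Even ((a : ℤ) ^ (k + 1) * z) ↔ Even (a : ℤ) := by
    rw [Int.even_mul, Int.even_pow' k.succ_ne_zero, or_iff_left (Int.not_even_iff_odd.2 hz)]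
  have heven : Even ((a : ℤ) ^ (i + 1) * (b ^ l * u) + a ^ (j + 1) * (b ^ m * v)) :=
    Int.even_add.2 ((hparity i (hbZ.pow.mul hu)).trans (hparity j (hbZ.pow.mul hv)).symm)
  exact Int.not_even_iff_odd.2 (hbZ.pow.mul hw) (hsum ▸ heven)

lemma exponent_eq_of_lt (ha : 0 < a) (hb : Odd b) (hln : l < n) (hx : x ∈ layer a b l)
    (hy : y ∈ layer a b m) (hxy : x + y ∈ layer a b n) : m = n := by
  rcases lt_trichotomy m n with hmn | hmn | hnm
  · exact absurd hxy (add_notMem_layer ha hb hln hmn hx hy)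
  · exact hmn
  · have hsub : x + y + -x ∉ layer a b m :=
      add_notMem_layer ha hb hnm (hln.trans hnm) hxy (neg_mem_layer hx)
    exact absurd hy (by rwa [add_neg_cancel_comm] at hsub)

lemma pow_le_two_mul_abs_sub (hx : x ∈ layer a b n) (hy : y ∈ layer a b n) (hxy : x ≠ y) :
    ((b : ℝ) / a) ^ n ≤ 2 * |x - y| := by
  obtain ⟨j, rfl⟩ := hx
  obtain ⟨k, rfl⟩ := hy
  have hjk : j - k ≠ 0 := sub_ne_zero.2 fun h => hxy (by rw [h])
  have hone : (1 : ℝ) ≤ |(j : ℝ) - k| := by exact_mod_cast Int.one_le_abs hjk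
  have hpow : (0 : ℝ) ≤ ((b : ℝ) / a) ^ n := by positivity
  calc ((b : ℝ) / a) ^ n
      ≤ ((b : ℝ) / a) ^ n * |(j : ℝ) - k| := le_mul_of_one_le_right hpow hone
    _ = 2 * |((b : ℝ) / a) ^ n * (j - k) / 2| := by
      rw [abs_div, abs_mul, abs_of_nonneg hpow, abs_two, mul_div_cancel₀ _ two_ne_zero]
    _ = _ := by ring_nf

lemma coe_addCircle_ne_zero (ha : 0 < a) (hb : Odd b) (hx : x ∈ OsetAB a b) :
    (x : AddCircle (1 / 2 : ℝ)) ≠ 0 := by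
  obtain ⟨n, hx⟩ := mem_iff_exists_mem_layer.1 hx
  obtain ⟨u, hu, hx⟩ := (mem_layer_iff ha).1 hx
  rw [Ne, AddCircle.coe_eq_zero_iff]
  rintro ⟨c, rfl⟩
  have heqR : 2 * ((a : ℝ) ^ n * c) = b ^ n * u := by
    rw [← hx, zsmul_eq_mul]
    ring
  have heq : 2 * ((a : ℤ) ^ n * c) = b ^ n * u := by exact_mod_cast heqR
  have hodd : Odd ((b : ℤ) ^ n * u) := ((Int.odd_coe_nat b).2 hb).pow.mul hu
  exact Int.not_even_iff_odd.2 hodd (heq ▸ even_two_mul _)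

lemma nsmul_coe_addCircle_eq_zero (ha : 0 < a) (hmn : m ≤ n) (hx : x ∈ layer a b m) :
    (2 * a ^ n) • (x : AddCircle (1 / 2 : ℝ)) = 0 := by
  obtain ⟨u, -, hx⟩ := (mem_layer_iff ha).1 hx
  obtain ⟨d, rfl⟩ := Nat.exists_eq_add_of_le hmn
  rw [← AddCircle.coe_nsmul, AddCircle.coe_eq_zero_iff]
  refine ⟨a ^ d * (b ^ m * u), ?_⟩
  rw [zsmul_eq_mul, nsmul_eq_mul]
  push_cast
  rw [← hx]
  ring

lemma finite_of_exponent_le (ha : 0 < a) (hb : Odd b) {Γ : Set ℝ}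
    (hΓ : Γ.Pairwise fun γ γ' => γ - γ' ∈ OsetAB a b) (γ₀ : ℝ) (N : ℕ)
    (hN : ∀ γ ∈ Γ, ∃ n ≤ N, γ - γ₀ ∈ layer a b n) : Γ.Finite := by
  have htorsion : {u : AddCircle (1 / 2 : ℝ) | (2 * a ^ N) • u = 0}.Finite :=
    AddCircle.finite_torsion _ (by positivity)
  refine htorsion.of_injOn (f := fun γ => ((γ - γ₀ : ℝ) : AddCircle (1 / 2 : ℝ))) ?_ ?_
  · intro γ hγ
    obtain ⟨n, hn, hmem⟩ := hN γ hγ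
    exact nsmul_coe_addCircle_eq_zero ha hn hmem
  · intro γ hγ γ' hγ' heq
    by_contra hne
    refine coe_addCircle_ne_zero ha hb (hΓ hγ hγ' hne) ?_
    rw [← sub_sub_sub_cancel_right γ γ' γ₀, AddCircle.coe_sub]
    exact sub_eq_zero.2 heq

lemma exists_exponent_le (ha : 0 < a) (hab : a < b) (hb : Odd b) (hx : x ∈ OsetAB a b) :
    ∃ N, ∀ n y, y ∈ layer a b n → y - x ∈ OsetAB a b → n ≤ N := by
  have hx0 : x ≠ 0 := by
    rintro rfl
    exact coe_addCircle_ne_zero ha hb hx (AddCircle.coe_zero _)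
  obtain ⟨m, hxm⟩ := mem_iff_exists_mem_layer.1 hx
  have hratio : 1 < (b : ℝ) / a :=
    (one_lt_div (by exact_mod_cast ha)).2 (by exact_mod_cast hab)
  obtain ⟨K, hK⟩ := pow_unbounded_of_one_lt (2 * |x|) hratio
  refine ⟨max m K, fun n y hy hyx => ?_⟩
  by_contra! hlt
  obtain ⟨hmn, hKn⟩ := max_lt_iff.1 hlt
  obtain ⟨l, hyx⟩ := mem_iff_exists_mem_layer.1 hyx
  obtain rfl : l = n := exponent_eq_of_lt ha hb hmn hxm hyx (by rwa [add_sub_cancel])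
  have hle : ((b : ℝ) / a) ^ l ≤ 2 * |x| := by
    simpa only [sub_sub_cancel] using
      pow_le_two_mul_abs_sub hy hyx (by rwa [Ne, eq_comm, sub_eq_self])
  exact absurd (hK.trans (pow_lt_pow_right₀ hratio hKn)) hle.not_gt

theorem finite_of_pairwise_sub_mem (ha : 0 < a) (hab : a < b) (hb : Odd b) {Γ : Set ℝ}
    (hΓ : Γ.Pairwise fun γ γ' => γ - γ' ∈ OsetAB a b) : Γ.Finite := by
  rcases Γ.subsingleton_or_nontrivial with hs | ⟨γ₀, h₀, γ₁, h₁, hne⟩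
  · exact hs.finite
  obtain ⟨N, hN⟩ := exists_exponent_le ha hab hb (hΓ h₁ h₀ hne.symm)
  refine Set.Finite.of_sdiff ?_ (Set.toFinite {γ₀, γ₁})
  refine finite_of_exponent_le ha hb (hΓ.mono Set.sdiff_subset) γ₀ N fun γ ⟨hγ, hγ01⟩ => ?_
  simp only [Set.mem_insert_iff, Set.mem_singleton_iff, not_or] at hγ01
  obtain ⟨n, hn⟩ := mem_iff_exists_mem_layer.1 (hΓ hγ h₀ hγ01.1)
  refine ⟨n, hN n _ hn ?_, hn⟩
  rw [sub_sub_sub_cancel_right]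
  exact hΓ hγ h₁ hγ01.2

lemma mem_layer_iff_cos_eq_zero (ha : 0 < a) (hb : 0 < b) :
    x ∈ layer a b n ↔ Real.cos (((a : ℝ) / b) ^ n * (2 * Real.pi * x)) = 0 := by
  rw [Real.cos_eq_zero_iff]
  refine exists_congr fun k => ?_
  have hpi := Real.pi_ne_zero
  rw [div_pow, div_pow]
  field_simp
  constructor <;> intro h <;> linear_combination h

end OsetAB

/-- Invariance of `ν` under the maps `τ±(x) = r x ± 1`, taken with equal weights; for `0 < r < 1`
the Bernoulli convolution `ν_r` is the unique probability measure with this property. -/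
def IsBernoulliInvariant (r : ℝ) (ν : Measure ℝ) : Prop :=
  ν = (1 / 2 : ℝ≥0∞) • Measure.map (fun x : ℝ => r * x + 1) ν
    + (1 / 2 : ℝ≥0∞) • Measure.map (fun x : ℝ => r * x - 1) ν

section CharFun

lemma charFun_add_measure {E : Type*} [SeminormedAddCommGroup E] [InnerProductSpace ℝ E]
    [MeasurableSpace E] [OpensMeasurableSpace E] (μ ν : Measure E) [IsFiniteMeasure μ]
    [IsFiniteMeasure ν] (t : E) : charFun (μ + ν) t = charFun μ t + charFun ν t := by
  simp only [charFun_eq_integral_innerProbChar]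
  exact integral_add_measure (BoundedContinuousFunction.integrable μ _)
    (BoundedContinuousFunction.integrable ν _)

lemma charFun_smul_measure {E : Type*} [Inner ℝ E] [MeasurableSpace E] (c : ℝ≥0∞) (μ : Measure E)
    (t : E) : charFun (c • μ) t = c.toReal • charFun μ t :=
  integral_smul_measure _ c

lemma charFun_map_mul_add (ν : Measure ℝ) (r c t : ℝ) :
    charFun (ν.map fun x => r * x + c) t
      = charFun ν (r * t) * Complex.exp (c * t * Complex.I) := by
  have hcomp : ν.map (fun x => r * x + c) = (ν.map (r * ·)).map (· + c) :=
    (Measure.map_map (measurable_add_const c) (measurable_const_mul r)).symm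
  rw [hcomp, charFun_map_add_const, charFun_map_mul]
  simp [mul_comm]

variable {ν : Measure ℝ}

namespace IsBernoulliInvariant

variable [IsFiniteMeasure ν] {r : ℝ}

lemma charFun_eq_cos_mul (hν : IsBernoulliInvariant r ν) (t : ℝ) :
    charFun ν t = Real.cos t * charFun ν (r * t) := by
  have hfin (f : ℝ → ℝ) : IsFiniteMeasure ((1 / 2 : ℝ≥0∞) • ν.map f) :=
    Measure.smul_finite _ (by simp)
  have hminus := charFun_map_mul_add ν r (-1) t
  simp only [← sub_eq_add_neg] at hminus
  conv_lhs => rw [hν]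
  rw [charFun_add_measure, charFun_smul_measure, charFun_smul_measure, charFun_map_mul_add,
    hminus, Complex.ofReal_cos, Complex.cos]
  simp only [one_div, ENNReal.toReal_inv, ENNReal.toReal_ofNat, Complex.ofReal_one, one_mul,
    Complex.real_smul, Complex.ofReal_inv, Complex.ofReal_ofNat, Complex.ofReal_neg, neg_mul]
  ring

lemma charFun_eq_prod_cos_mul (hν : IsBernoulliInvariant r ν) (t : ℝ) (n : ℕ) :
    charFun ν t = (∏ k ∈ Finset.range n, (Real.cos (r ^ k * t) : ℂ)) * charFun ν (r ^ n * t) := by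
  induction n with
  | zero => simp
  | succ n ih =>
    rw [ih, Finset.prod_range_succ, mul_assoc, hν.charFun_eq_cos_mul (r ^ n * t), ← mul_assoc r,
      ← pow_succ']

theorem charFun_eq_zero_iff [NeZero ν] (hν : IsBernoulliInvariant r ν) (hr : |r| < 1) (t : ℝ) :
    charFun ν t = 0 ↔ ∃ n : ℕ, Real.cos (r ^ n * t) = 0 := by
  constructor
  · intro ht
    by_contra! hcos
    have hzero (n : ℕ) : charFun ν (r ^ n * t) = 0 := by
      rw [hν.charFun_eq_prod_cos_mul t n] at ht
      refine (mul_eq_zero.1 ht).resolve_left (Finset.prod_ne_zero_iff.2 fun k _ => ?_)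
      exact_mod_cast hcos k
    have hscale : Filter.Tendsto (fun n : ℕ => r ^ n * t) Filter.atTop (nhds 0) := by
      simpa using (tendsto_pow_atTop_nhds_zero_of_abs_lt_one hr).mul_const t
    have hlim := (continuous_charFun (μ := ν)).tendsto 0 |>.comp hscale
    simp only [Function.comp_def, hzero] at hlim
    have hcharFun_zero : charFun ν 0 = 0 := tendsto_nhds_unique hlim tendsto_const_nhds
    rw [charFun_zero, Complex.ofReal_eq_zero] at hcharFun_zero
    exact measureReal_univ_ne_zero hcharFun_zero
  · rintro ⟨n, hn⟩
    rw [hν.charFun_eq_prod_cos_mul t (n + 1), Finset.prod_range_succ, hn]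
    simp

end IsBernoulliInvariant

lemma integral_exp_mul_conj_exp (ν : Measure ℝ) (γ γ' : ℝ) :
    ∫ x : ℝ, Complex.exp (2 * Real.pi * Complex.I * γ * x)
      * (starRingEnd ℂ) (Complex.exp (2 * Real.pi * Complex.I * γ' * x)) ∂ν
      = charFun ν (2 * Real.pi * (γ - γ')) := by
  rw [charFun_apply_real]
  congr 1 with x
  rw [← Complex.exp_conj, ← Complex.exp_add]
  congr 1
  simp only [map_mul, Complex.conj_ofReal, Complex.conj_I, Complex.conj_ofNat]
  push_cast
  ring

theorem integral_exp_mul_conj_exp_eq_zero_iff [IsFiniteMeasure ν] [NeZero ν] {a b : ℕ}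
    (ha : 0 < a) (hab : a < b) (hν : IsBernoulliInvariant ((a : ℝ) / b) ν) (γ γ' : ℝ) :
    ∫ x : ℝ, Complex.exp (2 * Real.pi * Complex.I * γ * x)
      * (starRingEnd ℂ) (Complex.exp (2 * Real.pi * Complex.I * γ' * x)) ∂ν = 0
      ↔ γ - γ' ∈ OsetAB a b := by
  have hb : 0 < b := ha.trans hab
  have hratio : |(a : ℝ) / b| < 1 := by
    rw [abs_of_nonneg (by positivity), div_lt_one (by exact_mod_cast hb)]
    exact_mod_cast hab
  simp only [integral_exp_mul_conj_exp, hν.charFun_eq_zero_iff hratio,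
    OsetAB.mem_iff_exists_mem_layer, OsetAB.mem_layer_iff_cos_eq_zero ha hb]

end CharFun

theorem odd_denominator_orthogonal_collections_finite_general
    {a b : ℕ} (ha : 0 < a) (hab : a < b) (hb : Odd b)
    {ν : Measure ℝ} [IsFiniteMeasure ν] [NeZero ν]
    (hν : IsBernoulliInvariant ((a : ℝ) / b) ν) :
    (∀ Γ : Set ℝ, (Γ.Pairwise fun γ γ' => γ - γ' ∈ OsetAB a b) → Γ.Finite) ∧
    (∀ Γ : Set ℝ, (Γ.Pairwise fun γ γ' =>
      ∫ x : ℝ, Complex.exp (2 * Real.pi * Complex.I * γ * x)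
        * (starRingEnd ℂ) (Complex.exp (2 * Real.pi * Complex.I * γ' * x)) ∂ν = 0) →
      Γ.Finite) := by
  simp only [integral_exp_mul_conj_exp_eq_zero_iff ha hab hν, and_self]
  exact fun Γ => OsetAB.finite_of_pairwise_sub_mem ha hab hb

/-- Let `a, b` be coprime positive integers with `a < b` and `b` odd.  Every set
`Γ ⊆ ℝ` whose pairwise differences of distinct elements lie in `𝒪_{a,b}` is finite;
consequently, for `λ = a/b` with `b` odd, every collection of pairwise orthogonal
exponentials in `L²(X_λ, ν_λ)` is finite. -/
theorem odd_denominator_orthogonal_collections_finite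
    (a b : ℕ) (ha : 0 < a) (hab : a < b) (hco : Nat.Coprime a b) (hb : Odd b)
    (ν : Measure ℝ) [IsProbabilityMeasure ν]
    (hatom : ∀ x : ℝ, ν {x} = 0)
    (hinv : ν = (1 / 2 : ℝ≥0∞) • Measure.map (fun x : ℝ => ((a : ℝ) / (b : ℝ)) * x + 1) ν
              + (1 / 2 : ℝ≥0∞) • Measure.map (fun x : ℝ => ((a : ℝ) / (b : ℝ)) * x - 1) ν) :
    (∀ Γ : Set ℝ, (∀ γ ∈ Γ, ∀ γ' ∈ Γ, γ ≠ γ' → γ - γ' ∈ OsetAB a b) → Γ.Finite) ∧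
    (∀ Γ : Set ℝ, (∀ γ ∈ Γ, ∀ γ' ∈ Γ, γ ≠ γ' →
      (∫ x : ℝ, Complex.exp (2 * Real.pi * Complex.I * γ * x)
        * (starRingEnd ℂ) (Complex.exp (2 * Real.pi * Complex.I * γ' * x)) ∂ν) = 0) →
      Γ.Finite) := by
  exact odd_denominator_orthogonal_collections_finite_general ha hab hb hinv
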